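/- Let S and A be nonempty finite types, P : S → A → PMF S a transition kernel, ρ0 a probability distribution on S, and γ ∈ [0,1). Let π and π' be policies with π(a|s) > 0 for all s, a, let σ ≥ 0, let R_e : S × A → ℝ and R_i : S × A → ℝ be reward functions, and set R = R_e + σ R_i. Let A_e, A_i, and A denote the advantage functions of π computed with rewards R_e, R_i, and R respectively (so that A = A_e + σ A_i), and set ε^{π'} = max_s |Σ_a π'(a|s) A(s,a)|. Suppose η ≥ 0 and Δ ∈ ℝ are such that Σ_s d^π(s) D_KL(π'(·|s)‖π(·|s)) ≤ η and Σ_s d^π(s) Σ_a π'(a|s) A_i(s,a) > 0. If σ ≥ (Σ_s d^π(s) Σ_a π'(a|s) A_i(s,a))^{-1} · [(1−γ)Δ − Σ_s d^π(s) Σ_a π'(a|s) A_e(s,a) + √(2η) γ ε^{π'}/(1−γ)], then J_R(π') − J_R(π) ≥ Δ. -/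

import Mathlib

open scoped BigOperators

section MDPdefs

variable {S A : Type*} [Fintype S] [Fintype A]

/-- The state-marginal distribution at time `t` under policy `π`:
`ρ_0 = ρ0` and `ρ_{t+1}(s') = ∑_s ∑_a ρ_t(s) π(a|s) P(s'|s,a)`. -/
noncomputable def stateMarginal (P : S → A → PMF S) (ρ0 : PMF S) (π : S → PMF A) :
    ℕ → S → ℝ
  | 0, s => (ρ0 s).toReal
  | t + 1, s' => ∑ s : S, ∑ a : A,
      stateMarginal P ρ0 π t s * (π s a).toReal * (P s a s').toReal

/-- The discounted state visitation distribution `d^π(s) = (1-γ) ∑_t γ^t ρ_t^π(s)`. -/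
noncomputable def dVisit (P : S → A → PMF S) (ρ0 : PMF S) (γ : ℝ) (π : S → PMF A)
    (s : S) : ℝ :=
  (1 - γ) * ∑' t : ℕ, γ ^ t * stateMarginal P ρ0 π t s

/-- The discounted return `J_R(π) = ∑_t γ^t ∑_s ∑_a ρ_t^π(s) π(a|s) R(s,a)`. -/
noncomputable def Jret (P : S → A → PMF S) (ρ0 : PMF S) (γ : ℝ) (π : S → PMF A)
    (R : S → A → ℝ) : ℝ :=
  ∑' t : ℕ, γ ^ t * ∑ s : S, ∑ a : A,
      stateMarginal P ρ0 π t s * (π s a).toReal * R s a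

/-- Total variational divergence between the action distributions of two policies at `s`. -/
noncomputable def dTV (π' π : S → PMF A) (s : S) : ℝ :=
  (1 / 2) * ∑ a : A, |(π' s a).toReal - (π s a).toReal|

/-- Value function of `π` with reward `R`: expected discounted return started at `s`. -/
noncomputable def Vval (P : S → A → PMF S) (γ : ℝ) (π : S → PMF A) (R : S → A → ℝ)
    (s : S) : ℝ :=
  Jret P (PMF.pure s) γ π R

/-- State-action value function `Q^π_R(s,a) = R(s,a) + γ ∑_{s'} P(s'|s,a) V^π_R(s')`. -/
noncomputable def Qval (P : S → A → PMF S) (γ : ℝ) (π : S → PMF A) (R : S → A → ℝ)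
    (s : S) (a : A) : ℝ :=
  R s a + γ * ∑ s' : S, (P s a s').toReal * Vval P γ π R s'

/-- Advantage function `A^π_R(s,a) = Q^π_R(s,a) - V^π_R(s)`. -/
noncomputable def Aadv (P : S → A → PMF S) (γ : ℝ) (π : S → PMF A) (R : S → A → ℝ)
    (s : S) (a : A) : ℝ :=
  Qval P γ π R s a - Vval P γ π R s

/-- Kullback–Leibler divergence between the action distributions at state `s`. -/
noncomputable def dKL (π' π : S → PMF A) (s : S) : ℝ :=
  ∑ a : A, (π' s a).toReal * Real.log ((π' s a).toReal / (π s a).toReal)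

end MDPdefs

section MDPhelpers

variable {S A : Type*} [Fintype S] [Fintype A]

lemma pmf_sum_toReal {B : Type*} [Fintype B] (p : PMF B) : ∑ b : B, (p b).toReal = 1 := by
  rw [← ENNReal.toReal_sum (fun b _ => p.apply_ne_top b), ← tsum_fintype (L := .unconditional B), p.tsum_coe]
  simp

lemma sm_nonneg (P : S → A → PMF S) (ρ0 : PMF S) (π : S → PMF A) (t : ℕ) (s : S) :
    0 ≤ stateMarginal P ρ0 π t s := by
  induction t generalizing s with
  | zero => exact ENNReal.toReal_nonneg
  | succ t ih =>
    rw [stateMarginal]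
    exact Finset.sum_nonneg fun s _ => Finset.sum_nonneg fun a _ =>
      mul_nonneg (mul_nonneg (ih s) ENNReal.toReal_nonneg) ENNReal.toReal_nonneg

lemma flow_sum (P : S → A → PMF S) (f : S → A → ℝ) :
    ∑ s' : S, ∑ s : S, ∑ a : A, f s a * (P s a s').toReal = ∑ s, ∑ a, f s a := by
  rw [Finset.sum_comm]
  refine Finset.sum_congr rfl fun s _ => ?_
  rw [Finset.sum_comm]
  refine Finset.sum_congr rfl fun a _ => ?_
  rw [← Finset.mul_sum, pmf_sum_toReal, mul_one]

lemma sm_sum (P : S → A → PMF S) (ρ0 : PMF S) (π : S → PMF A) (t : ℕ) :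
    ∑ s, stateMarginal P ρ0 π t s = 1 := by
  induction t with
  | zero => exact pmf_sum_toReal ρ0
  | succ t ih =>
    simp only [stateMarginal]
    rw [flow_sum P (fun s a => stateMarginal P ρ0 π t s * (π s a).toReal), ← ih]
    refine Finset.sum_congr rfl fun s _ => ?_
    rw [← Finset.mul_sum, pmf_sum_toReal, mul_one]

lemma sm_le_one (P : S → A → PMF S) (ρ0 : PMF S) (π : S → PMF A) (t : ℕ) (s : S) :
    stateMarginal P ρ0 π t s ≤ 1 := by
  rw [← sm_sum P ρ0 π t]
  exact Finset.single_le_sum (fun i _ => sm_nonneg P ρ0 π t i) (Finset.mem_univ s)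

lemma sm_summable (P : S → A → PMF S) (ρ0 : PMF S) (π : S → PMF A) (γ : ℝ) (h0 : 0 ≤ γ)
    (h1 : γ < 1) (s : S) : Summable fun t => γ ^ t * stateMarginal P ρ0 π t s := by
  refine Summable.of_nonneg_of_le (fun t => mul_nonneg (pow_nonneg h0 t) (sm_nonneg ..))
    (fun t => ?_) (summable_geometric_of_lt_one h0 h1)
  exact mul_le_of_le_one_right (pow_nonneg h0 t) (sm_le_one ..)

lemma dVisit_nonneg (P : S → A → PMF S) (ρ0 : PMF S) (π : S → PMF A) (γ : ℝ) (h0 : 0 ≤ γ)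
    (h1 : γ < 1) (s : S) : 0 ≤ dVisit P ρ0 γ π s :=
  mul_nonneg (by linarith) (tsum_nonneg fun t => mul_nonneg (pow_nonneg h0 t) (sm_nonneg ..))

lemma dVisit_sum (P : S → A → PMF S) (ρ0 : PMF S) (π : S → PMF A) (γ : ℝ) (h0 : 0 ≤ γ)
    (h1 : γ < 1) : ∑ s, dVisit P ρ0 γ π s = 1 := by
  simp only [dVisit]
  rw [← Finset.mul_sum, ← Summable.tsum_finsetSum (fun s _ => sm_summable P ρ0 π γ h0 h1 s)]
  simp only [← Finset.mul_sum, sm_sum, mul_one]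
  rw [tsum_geometric_of_lt_one h0 h1]
  exact mul_inv_cancel₀ (by linarith)

lemma Jret_eq (P : S → A → PMF S) (ρ0 : PMF S) (π : S → PMF A) (γ : ℝ) (h0 : 0 ≤ γ)
    (h1 : γ < 1) (R : S → A → ℝ) :
    (1 - γ) * Jret P ρ0 γ π R = ∑ s, ∑ a, dVisit P ρ0 γ π s * (π s a).toReal * R s a := by
  have h : HasSum (fun t : ℕ => γ ^ t * ∑ s : S, ∑ a : A,
      stateMarginal P ρ0 π t s * (π s a).toReal * R s a)
      (∑ s : S, ∑ a : A, (∑' t : ℕ, γ ^ t * stateMarginal P ρ0 π t s) *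
        ((π s a).toReal * R s a)) := by
    have := hasSum_sum (s := Finset.univ) fun s _ => hasSum_sum (s := Finset.univ)
      fun a _ => (sm_summable P ρ0 π γ h0 h1 s).hasSum.mul_right ((π s a).toReal * R s a)
    refine (congrArg (fun g : ℕ → ℝ => HasSum g _) (funext fun t => ?_)).mpr this
    simp only [Finset.mul_sum]
    refine Finset.sum_congr rfl fun s _ => Finset.sum_congr rfl fun a _ => by ring
  rw [Jret, h.tsum_eq]
  simp only [Finset.mul_sum, dVisit]
  refine Finset.sum_congr rfl fun s _ => Finset.sum_congr rfl fun a _ => by ring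

lemma dVisit_flow (P : S → A → PMF S) (ρ0 : PMF S) (π : S → PMF A) (γ : ℝ) (h0 : 0 ≤ γ)
    (h1 : γ < 1) (s' : S) :
    dVisit P ρ0 γ π s' = (1 - γ) * (ρ0 s').toReal +
      γ * ∑ s, ∑ a, dVisit P ρ0 γ π s * (π s a).toReal * (P s a s').toReal := by
  rw [← Jret_eq P ρ0 π γ h0 h1 (fun s a => (P s a s').toReal), dVisit, Jret,
    (sm_summable P ρ0 π γ h0 h1 s').tsum_eq_zero_add]
  simp only [stateMarginal, pow_succ', mul_assoc, tsum_mul_left]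
  simp
  ring

lemma sum3 (f : S → S → A → ℝ) : ∑ x, ∑ s, ∑ a, f x s a = ∑ s, ∑ a, ∑ x, f x s a := by
  rw [Finset.sum_comm]
  refine Finset.sum_congr rfl fun s _ => ?_
  rw [Finset.sum_comm]

lemma sm_linear (P : S → A → PMF S) (ρ0 : PMF S) (π : S → PMF A) (t : ℕ) (s' : S) :
    stateMarginal P ρ0 π t s' =
      ∑ s0, (ρ0 s0).toReal * stateMarginal P (PMF.pure s0) π t s' := by
  classical
  induction t generalizing s' with
  | zero =>
    simp only [stateMarginal, PMF.pure_apply]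
    rw [Finset.sum_eq_single s'] <;> simp +contextual [eq_comm]
  | succ t ih =>
    simp only [stateMarginal, Finset.mul_sum]
    rw [sum3]
    refine Finset.sum_congr rfl fun s _ => Finset.sum_congr rfl fun a _ => ?_
    rw [ih s, Finset.sum_mul, Finset.sum_mul]
    refine Finset.sum_congr rfl fun s0 _ => by ring

lemma dVisit_linear (P : S → A → PMF S) (ρ0 : PMF S) (π : S → PMF A) (γ : ℝ) (h0 : 0 ≤ γ)
    (h1 : γ < 1) (s : S) :
    dVisit P ρ0 γ π s = ∑ s0, (ρ0 s0).toReal * dVisit P (PMF.pure s0) γ π s := by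
  have h := hasSum_sum (s := Finset.univ) fun s0 _ =>
    (sm_summable P (PMF.pure s0) π γ h0 h1 s).hasSum.mul_left (ρ0 s0).toReal
  have h2 : (fun t => γ ^ t * stateMarginal P ρ0 π t s) = fun t => ∑ s0, (ρ0 s0).toReal *
      (γ ^ t * stateMarginal P (PMF.pure s0) π t s) := by
    funext t
    rw [sm_linear, Finset.mul_sum]
    refine Finset.sum_congr rfl fun s0 _ => by ring
  rw [dVisit, h2, h.tsum_eq, Finset.mul_sum]
  simp only [dVisit]
  refine Finset.sum_congr rfl fun s0 _ => by ring

lemma Jret_V (P : S → A → PMF S) (ρ0 : PMF S) (π : S → PMF A) (γ : ℝ) (h0 : 0 ≤ γ)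
    (h1 : γ < 1) (R : S → A → ℝ) :
    Jret P ρ0 γ π R = ∑ s, (ρ0 s).toReal * Vval P γ π R s := by
  have hne : (1 - γ) ≠ 0 := by linarith
  apply mul_left_cancel₀ hne
  rw [Jret_eq P ρ0 π γ h0 h1, Finset.mul_sum]
  have : ∀ s0, (1 - γ) * ((ρ0 s0).toReal * Vval P γ π R s0) =
      ∑ s, ∑ a, (ρ0 s0).toReal * (dVisit P (PMF.pure s0) γ π s * (π s a).toReal * R s a) := by
    intro s0
    rw [mul_left_comm, Vval, Jret_eq P _ π γ h0 h1]
    simp only [Finset.mul_sum]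
  simp only [this]
  rw [sum3]
  refine Finset.sum_congr rfl fun s _ => Finset.sum_congr rfl fun a _ => ?_
  rw [dVisit_linear P ρ0 π γ h0 h1, Finset.sum_mul, Finset.sum_mul]
  refine Finset.sum_congr rfl fun s0 _ => by ring

lemma perf_diff (P : S → A → PMF S) (ρ0 : PMF S) (π π' : S → PMF A) (γ : ℝ) (h0 : 0 ≤ γ)
    (h1 : γ < 1) (R : S → A → ℝ) :
    (1 - γ) * (Jret P ρ0 γ π' R - Jret P ρ0 γ π R) =
      ∑ s, dVisit P ρ0 γ π' s * ∑ a, (π' s a).toReal * Aadv P γ π R s a := by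
  set V := Vval P γ π R with hV
  set d := dVisit P ρ0 γ π' with hd
  have e1 : ∀ s, d s * ∑ a, (π' s a).toReal * Aadv P γ π R s a =
      (∑ a, d s * (π' s a).toReal * R s a) +
      (∑ a, d s * (π' s a).toReal * (γ * ∑ s', (P s a s').toReal * V s')) - d s * V s := by
    intro s
    have : d s * V s = ∑ a, d s * (π' s a).toReal * V s := by
      rw [← Finset.sum_mul, ← Finset.mul_sum, pmf_sum_toReal, mul_one]
    rw [this, ← Finset.sum_add_distrib, ← Finset.sum_sub_distrib, Finset.mul_sum]
    refine Finset.sum_congr rfl fun a _ => ?_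
    simp only [Aadv, Qval, ← hV]
    ring
  have e2 : ∑ s, ∑ a, d s * (π' s a).toReal * (γ * ∑ s', (P s a s').toReal * V s') =
      ∑ s', (d s' - (1 - γ) * (ρ0 s').toReal) * V s' := by
    have : ∀ s', (d s' - (1 - γ) * (ρ0 s').toReal) * V s' =
        ∑ s, ∑ a, d s * (π' s a).toReal * (γ * ((P s a s').toReal * V s')) := by
      intro s'
      rw [hd, dVisit_flow P ρ0 π' γ h0 h1 s', add_sub_cancel_left, ← hd]
      simp only [Finset.mul_sum, Finset.sum_mul]
      refine Finset.sum_congr rfl fun s _ => Finset.sum_congr rfl fun a _ => by ring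
    simp only [this]
    rw [sum3]
    refine Finset.sum_congr rfl fun s _ => Finset.sum_congr rfl fun a _ => ?_
    simp only [Finset.mul_sum]
  have e3 : ∑ s', (d s' - (1 - γ) * (ρ0 s').toReal) * V s' =
      ∑ s', d s' * V s' - ∑ s', (1 - γ) * ((ρ0 s').toReal * V s') := by
    rw [← Finset.sum_sub_distrib]
    refine Finset.sum_congr rfl fun s _ => by ring
  simp only [e1]
  rw [Finset.sum_sub_distrib, Finset.sum_add_distrib, e2, mul_sub, Jret_eq P ρ0 π' γ h0 h1,
    Jret_V P ρ0 π γ h0 h1, Finset.mul_sum, ← hV, e3]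
  ring

lemma dVisit_l1 (P : S → A → PMF S) (ρ0 : PMF S) (π π' : S → PMF A) (γ : ℝ) (h0 : 0 ≤ γ)
    (h1 : γ < 1) :
    (1 - γ) * ∑ s, |dVisit P ρ0 γ π' s - dVisit P ρ0 γ π s| ≤
      γ * ∑ s, ∑ a, dVisit P ρ0 γ π s * |(π' s a).toReal - (π s a).toReal| := by
  set d := dVisit P ρ0 γ π with hd
  set d' := dVisit P ρ0 γ π' with hd'
  have key : ∀ s', |d' s' - d s'| ≤ γ * ∑ s, ∑ a, (|d' s - d s| * (π' s a).toReal +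
      d s * |(π' s a).toReal - (π s a).toReal|) * (P s a s').toReal := by
    intro s'
    have : d' s' - d s' = γ * ∑ s, ∑ a, ((d' s - d s) * (π' s a).toReal +
      d s * ((π' s a).toReal - (π s a).toReal)) * (P s a s').toReal := by
      have a1 := dVisit_flow P ρ0 π' γ h0 h1 s'
      have a2 := dVisit_flow P ρ0 π γ h0 h1 s'
      rw [← hd'] at a1
      rw [← hd] at a2
      rw [a1, a2, add_sub_add_left_eq_sub, ← mul_sub, ← Finset.sum_sub_distrib]
      simp only [← Finset.sum_sub_distrib]
      congr 1
      refine Finset.sum_congr rfl fun s _ => Finset.sum_congr rfl fun a _ => by ring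
    rw [this, abs_mul, abs_of_nonneg h0]
    refine mul_le_mul_of_nonneg_left ?_ h0
    refine (Finset.abs_sum_le_sum_abs _ _).trans (Finset.sum_le_sum fun s _ => ?_)
    refine (Finset.abs_sum_le_sum_abs _ _).trans (Finset.sum_le_sum fun a _ => ?_)
    rw [abs_mul, abs_of_nonneg (ENNReal.toReal_nonneg (a := P s a s'))]
    refine mul_le_mul_of_nonneg_right ?_ ENNReal.toReal_nonneg
    refine (abs_add_le _ _).trans (le_of_eq ?_)
    rw [abs_mul, abs_mul, abs_of_nonneg (ENNReal.toReal_nonneg (a := π' s a)),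
      abs_of_nonneg (dVisit_nonneg P ρ0 π γ h0 h1 s)]
  have h := Finset.sum_le_sum fun s' (_ : s' ∈ Finset.univ) => key s'
  rw [← Finset.mul_sum, flow_sum P (fun s a => |d' s - d s| * (π' s a).toReal +
      d s * |(π' s a).toReal - (π s a).toReal|)] at h
  simp only [Finset.sum_add_distrib] at h
  simp only [← Finset.mul_sum, pmf_sum_toReal, mul_one] at h
  simp only [← Finset.mul_sum]
  linarith

lemma log_aux {x : ℝ} (hx : 0 < x) :
    (x - 1) * (5 * x + 1) / (2 * x * (x + 2)) ≤ Real.log x := by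
  let h : ℝ → ℝ := fun x => Real.log x - (x - 1) * (5 * x + 1) / (2 * x * (x + 2))
  have hder : ∀ y, 0 < y → HasDerivAt h ((y - 1) ^ 3 / (y ^ 2 * (y + 2) ^ 2)) y := by
    intro y hy
    have hden : 2 * y * (y + 2) ≠ 0 := by positivity
    have h1 : HasDerivAt (fun x : ℝ => (x - 1) * (5 * x + 1)) (1 * (5 * y + 1) + (y - 1) * (5 * 1)) y :=
      ((hasDerivAt_id y).sub_const 1).mul (((hasDerivAt_id y).const_mul 5).add_const 1)
    have h2 : HasDerivAt (fun x : ℝ => 2 * x * (x + 2)) (2 * 1 * (y + 2) + 2 * y * 1) y :=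
      ((hasDerivAt_id y).const_mul 2).mul ((hasDerivAt_id y).add_const 2)
    have h3 := (Real.hasDerivAt_log hy.ne').sub (h1.div h2 hden)
    refine h3.congr_deriv ?_
    field_simp
    ring
  have hh1 : h 1 = 0 := by simp [h]
  suffices 0 ≤ h x by simpa [h] using this
  rw [← hh1]
  rcases le_total x 1 with hx1 | hx1
  · have : AntitoneOn h (Set.Icc x 1) := by
      apply antitoneOn_of_deriv_nonpos (convex_Icc _ _)
      · intro y hy
        exact (hder y (by linarith [hy.1])).continuousAt.continuousWithinAt
      · intro y hy
        rw [interior_Icc] at hy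
        exact (hder y (by linarith [hy.1])).differentiableAt.differentiableWithinAt
      · intro y hy
        rw [interior_Icc] at hy
        rw [(hder y (by linarith [hy.1])).deriv]
        apply div_nonpos_of_nonpos_of_nonneg _ (by positivity)
        have : 0 ≤ (1 - y) ^ 3 := pow_nonneg (by linarith [hy.2]) 3
        nlinarith
    exact this ⟨le_rfl, hx1⟩ ⟨hx1, le_rfl⟩ hx1
  · have : MonotoneOn h (Set.Icc 1 x) := by
      apply monotoneOn_of_deriv_nonneg (convex_Icc _ _)
      · intro y hy
        exact (hder y (by linarith [hy.1])).continuousAt.continuousWithinAt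
      · intro y hy
        rw [interior_Icc] at hy
        exact (hder y (by linarith [hy.1])).differentiableAt.differentiableWithinAt
      · intro y hy
        rw [interior_Icc] at hy
        rw [(hder y (by linarith [hy.1])).deriv]
        have : 0 ≤ (y - 1) ^ 3 := pow_nonneg (by linarith [hy.1]) 3
        positivity
    exact this ⟨le_rfl, hx1⟩ ⟨hx1, le_rfl⟩ hx1

lemma kl_aux {p q : ℝ} (hp : 0 ≤ p) (hq : 0 < q) :
    3 * (p - q) ^ 2 / (2 * (p + 2 * q)) ≤ p * Real.log (p / q) - p + q := by
  rcases hp.eq_or_lt with rfl | hp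
  · simp
    rw [div_le_iff₀ (by positivity)]
    nlinarith
  · have h := mul_le_mul_of_nonneg_left (log_aux (div_pos hp hq)) hp.le
    have e : 3 * (p - q) ^ 2 / (2 * (p + 2 * q)) =
      p * ((p / q - 1) * (5 * (p / q) + 1) / (2 * (p / q) * (p / q + 2))) - p + q := by
      field_simp
      ring
    linarith

lemma l1_le_sqrt (d : S → ℝ) (hd : ∀ s, 0 ≤ d s) (hd1 : ∑ s, d s = 1) (π π' : S → PMF A)
    (hπpos : ∀ s a, 0 < (π s a).toReal) (η : ℝ) (hKL : ∑ s, d s * dKL π' π s ≤ η) :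
    ∑ s, ∑ a, d s * |(π' s a).toReal - (π s a).toReal| ≤ Real.sqrt (2 * η) := by
  apply Real.le_sqrt_of_sq_le
  have hden : ∀ s a, 0 < (π' s a).toReal + 2 * (π s a).toReal := fun s a => by
    have := hπpos s a
    have : 0 ≤ (π' s a).toReal := ENNReal.toReal_nonneg
    linarith
  have cs := Finset.sum_sq_le_sum_mul_sum_of_sq_le_mul (Finset.univ : Finset (S × A))
    (r := fun x => d x.1 * |(π' x.1 x.2).toReal - (π x.1 x.2).toReal|)
    (f := fun x => d x.1 * ((π' x.1 x.2).toReal + 2 * (π x.1 x.2).toReal))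
    (g := fun x => d x.1 * (((π' x.1 x.2).toReal - (π x.1 x.2).toReal) ^ 2 /
      ((π' x.1 x.2).toReal + 2 * (π x.1 x.2).toReal)))
    (fun x _ => mul_nonneg (hd _) (hden _ _).le)
    (fun x _ => mul_nonneg (hd _) (div_nonneg (sq_nonneg _) (hden _ _).le))
    (fun x _ => by
      have := (hden x.1 x.2).ne'
      rw [mul_pow, sq_abs]
      apply le_of_eq
      rw [mul_mul_mul_comm, mul_div_cancel₀ _ this, sq (d x.1)])
  simp only [Fintype.sum_prod_type] at cs
  have e1 : ∑ s, ∑ a, d s * ((π' s a).toReal + 2 * (π s a).toReal) = 3 := by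
    simp only [← Finset.mul_sum, Finset.sum_add_distrib, pmf_sum_toReal]
    rw [← Finset.sum_mul, hd1]
    norm_num
  have e2 : ∑ s, ∑ a, d s * (((π' s a).toReal - (π s a).toReal) ^ 2 /
      ((π' s a).toReal + 2 * (π s a).toReal)) ≤ 2 / 3 * ∑ s, d s * dKL π' π s := by
    rw [Finset.mul_sum]
    refine Finset.sum_le_sum fun s _ => ?_
    rw [← Finset.mul_sum, mul_left_comm]
    refine mul_le_mul_of_nonneg_left ?_ (hd s)
    have : dKL π' π s = ∑ a, ((π' s a).toReal * Real.log ((π' s a).toReal / (π s a).toReal)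
        - (π' s a).toReal + (π s a).toReal) := by
      rw [Finset.sum_add_distrib, Finset.sum_sub_distrib, pmf_sum_toReal, pmf_sum_toReal, dKL]
      ring
    rw [this, Finset.mul_sum]
    refine Finset.sum_le_sum fun a _ => ?_
    have k := kl_aux (p := (π' s a).toReal) ENNReal.toReal_nonneg (hπpos s a)
    rw [mul_div_mul_comm] at k
    linarith
  rw [e1] at cs
  linarith

lemma Aadv_linear (P : S → A → PMF S) (π : S → PMF A) (γ : ℝ) (h0 : 0 ≤ γ)
    (h1 : γ < 1) (Re Ri : S → A → ℝ) (σ : ℝ) (s : S) (a : A) :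
    Aadv P γ π (fun s a => Re s a + σ * Ri s a) s a =
      Aadv P γ π Re s a + σ * Aadv P γ π Ri s a := by
  have hV : ∀ s, Vval P γ π (fun s a => Re s a + σ * Ri s a) s =
      Vval P γ π Re s + σ * Vval P γ π Ri s := by
    intro s
    have hne : (1 - γ) ≠ 0 := by linarith
    apply mul_left_cancel₀ hne
    rw [mul_add, mul_left_comm, Vval, Vval, Vval, Jret_eq P _ π γ h0 h1, Jret_eq P _ π γ h0 h1,
      Jret_eq P _ π γ h0 h1]
    simp only [Finset.mul_sum, ← Finset.sum_add_distrib]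
    refine Finset.sum_congr rfl fun s _ => Finset.sum_congr rfl fun a _ => by ring
  have e : ∑ s', (P s a s').toReal * (Vval P γ π Re s' + σ * Vval P γ π Ri s') =
      ∑ s', (P s a s').toReal * Vval P γ π Re s' +
        σ * ∑ s', (P s a s').toReal * Vval P γ π Ri s' := by
    simp only [Finset.mul_sum, ← Finset.sum_add_distrib]
    refine Finset.sum_congr rfl fun s _ => by ring
  simp only [Aadv, Qval, hV, e]
  ring

end MDPhelpers


/-- Corollary 2: a lower bound on the Lagrange multiplier σ guaranteeing the
performance improvement `J_R(π') − J_R(π) ≥ Δ`. -/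
theorem tace_corollary_two
    {S A : Type*} [Fintype S] [Fintype A] [Nonempty S] [Nonempty A]
    (P : S → A → PMF S) (ρ0 : PMF S) (γ : ℝ) (hγ0 : 0 ≤ γ) (hγ1 : γ < 1)
    (π π' : S → PMF A) (hπpos : ∀ s a, 0 < (π s a).toReal)
    (σ : ℝ) (hσ : 0 ≤ σ) (Re Ri : S → A → ℝ) (η Δ : ℝ) (hη : 0 ≤ η) :
    let R : S → A → ℝ := fun s a => Re s a + σ * Ri s a
    let ε : ℝ := ⨆ s : S, |∑ a : A, (π' s a).toReal * Aadv P γ π R s a|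
    ∀ _hKL : ∑ s : S, dVisit P ρ0 γ π s * dKL π' π s ≤ η,
    ∀ _hAi : 0 < ∑ s : S, dVisit P ρ0 γ π s * ∑ a : A, (π' s a).toReal * Aadv P γ π Ri s a,
    ∀ _hσge : σ ≥
        (∑ s : S, dVisit P ρ0 γ π s * ∑ a : A, (π' s a).toReal * Aadv P γ π Ri s a)⁻¹ *
          ((1 - γ) * Δ -
            (∑ s : S, dVisit P ρ0 γ π s * ∑ a : A, (π' s a).toReal * Aadv P γ π Re s a) +
            Real.sqrt (2 * η) * γ * ε / (1 - γ)),
    Jret P ρ0 γ π' R - Jret P ρ0 γ π R ≥ Δ := by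
  intro R ε hKL hAi hσge
  have h1γ : 0 < 1 - γ := by linarith
  set d := dVisit P ρ0 γ π with hd
  set d' := dVisit P ρ0 γ π' with hd'
  set f : S → ℝ := fun s => ∑ a : A, (π' s a).toReal * Aadv P γ π R s a with hf
  have hfe : ∀ s, |f s| ≤ ε := fun s => le_ciSup (f := fun s => |f s|) (Set.finite_range _).bddAbove s
  have hε : 0 ≤ ε := (abs_nonneg _).trans (hfe (Classical.arbitrary S))
  have hpd : (1 - γ) * (Jret P ρ0 γ π' R - Jret P ρ0 γ π R) = ∑ s, d' s * f s :=
    perf_diff P ρ0 π π' γ hγ0 hγ1 R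
  have hl1 := dVisit_l1 P ρ0 π π' γ hγ0 hγ1
  have hsq := l1_le_sqrt d (dVisit_nonneg P ρ0 π γ hγ0 hγ1) (dVisit_sum P ρ0 π γ hγ0 hγ1)
    π π' hπpos η hKL
  rw [← hd, ← hd'] at hl1
  have hL : ∑ s, |d' s - d s| ≤ Real.sqrt (2 * η) * γ / (1 - γ) := by
    rw [le_div_iff₀ h1γ]
    have := mul_le_mul_of_nonneg_left hsq hγ0
    linarith
  have hdiff : ∑ s, d s * f s - ∑ s, d' s * f s ≤ (∑ s, |d' s - d s|) * ε := by
    rw [← Finset.sum_sub_distrib, Finset.sum_mul]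
    refine Finset.sum_le_sum fun s _ => ?_
    rw [← sub_mul]
    refine (le_abs_self _).trans ?_
    rw [abs_mul, abs_sub_comm]
    exact mul_le_mul_of_nonneg_left (hfe s) (abs_nonneg _)
  have hlin : ∑ s, d s * f s = (∑ s, d s * ∑ a, (π' s a).toReal * Aadv P γ π Re s a) +
      σ * ∑ s, d s * ∑ a, (π' s a).toReal * Aadv P γ π Ri s a := by
    simp only [hf, R, Aadv_linear P π γ hγ0 hγ1, Finset.mul_sum, ← Finset.sum_add_distrib]
    refine Finset.sum_congr rfl fun s _ => Finset.sum_congr rfl fun a _ => by ring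
  have hm := mul_le_mul_of_nonneg_right hL hε
  rw [ge_iff_le, inv_mul_le_iff₀ hAi] at hσge
  have he : Real.sqrt (2 * η) * γ * ε / (1 - γ) = Real.sqrt (2 * η) * γ / (1 - γ) * ε := by ring
  rw [he] at hσge
  have hfin : (1 - γ) * Δ ≤ (1 - γ) * (Jret P ρ0 γ π' R - Jret P ρ0 γ π R) := by
    linarith
  exact le_of_mul_le_mul_left hfin h1γ
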